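/- With A_g as above (g ≥ 2, n ≥ 2), an additive basis of A_g is also given by the images of the monomials v_1⋯v_n such that (i) each v_i ∈ {1, x_i(p), y_i(p), ω_i : 1 ≤ p ≤ g}, and (ii) at most one of v_1,…,v_n belongs to {x_i(p), y_i(p), ω_i : 2 ≤ p ≤ g}. -/

import Mathlib

/-- Generators of the rational cohomology of the `n`-fold power of a genus-`g` surface:
`a i p`, `b i p` in degree 1 and `w i` (the class `ω_i`) in degree 2.  The indices are
`0`-based: `a i p` stands for the class `a_{i+1}(p+1)` of the paper. -/
inductive SurfGen (n g : ℕ) : Type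
  | a (i : Fin n) (p : Fin g)
  | b (i : Fin n) (p : Fin g)
  | w (i : Fin n)

/-- The cohomological degree of a generator. -/
def SurfGen.deg {n g : ℕ} : SurfGen n g → ℕ
  | .a _ _ => 1
  | .b _ _ => 1
  | .w _ => 2

open FreeAlgebra in
/-- The defining relations of `H^*(Σ_g^{×n}; ℚ)`: within each factor,
`a_i(p)a_i(q) = b_i(p)b_i(q) = 0`, `a_i(p)b_i(q) = δ_{pq} ω_i`, together with
graded (Koszul-signed) commutativity of the generators. -/
inductive SurfRel (n g : ℕ) :
    FreeAlgebra ℚ (SurfGen n g) → FreeAlgebra ℚ (SurfGen n g) → Prop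
  | aa (i : Fin n) (p q : Fin g) :
      SurfRel n g (ι ℚ (SurfGen.a i p) * ι ℚ (SurfGen.a i q)) 0
  | bb (i : Fin n) (p q : Fin g) :
      SurfRel n g (ι ℚ (SurfGen.b i p) * ι ℚ (SurfGen.b i q)) 0
  | ab_eq (i : Fin n) (p : Fin g) :
      SurfRel n g (ι ℚ (SurfGen.a i p) * ι ℚ (SurfGen.b i p)) (ι ℚ (SurfGen.w i))
  | ab_ne (i : Fin n) (p q : Fin g) : p ≠ q →
      SurfRel n g (ι ℚ (SurfGen.a i p) * ι ℚ (SurfGen.b i q)) 0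
  | koszul (u v : SurfGen n g) :
      SurfRel n g (ι ℚ u * ι ℚ v)
        (((-1 : ℚ) ^ (u.deg * v.deg)) • (ι ℚ v * ι ℚ u))

/-- `H^*(Σ_g^{×n}; ℚ)`, presented by generators and relations. -/
def SurfCoh (n g : ℕ) : Type := RingQuot (SurfRel n g)

noncomputable instance (n g : ℕ) : Ring (SurfCoh n g) :=
  inferInstanceAs (Ring (RingQuot (SurfRel n g)))

noncomputable instance (n g : ℕ) : Algebra ℚ (SurfCoh n g) :=
  inferInstanceAs (Algebra ℚ (RingQuot (SurfRel n g)))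

/-- The class `a_{i+1}(p+1)`. -/
noncomputable def gA {n g : ℕ} (i : Fin n) (p : Fin g) : SurfCoh n g :=
  RingQuot.mkAlgHom ℚ (SurfRel n g) (FreeAlgebra.ι ℚ (SurfGen.a i p))

/-- The class `b_{i+1}(p+1)`. -/
noncomputable def gB {n g : ℕ} (i : Fin n) (p : Fin g) : SurfCoh n g :=
  RingQuot.mkAlgHom ℚ (SurfRel n g) (FreeAlgebra.ι ℚ (SurfGen.b i p))

/-- The class `ω_{i+1}`. -/
noncomputable def gW {n g : ℕ} (i : Fin n) : SurfCoh n g :=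
  RingQuot.mkAlgHom ℚ (SurfRel n g) (FreeAlgebra.ι ℚ (SurfGen.w i))

/-- The class `x_{i+1}(p+1)`: equal to `a_{i+1}(p+1)` unless `p+1 = 1` and `i+1 ≥ 2`, in which
case it is `a_{i+1}(1) - a_1(1)`. -/
noncomputable def gX {n g : ℕ} [NeZero n] [NeZero g] (i : Fin n) (p : Fin g) : SurfCoh n g :=
  if p = 0 ∧ i ≠ 0 then gA i p - gA 0 p else gA i p

/-- The class `y_{i+1}(p+1)`: equal to `b_{i+1}(p+1)` unless `p+1 = 1` and `i+1 ≥ 2`, in which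
case it is `b_{i+1}(1) - b_1(1)`. -/
noncomputable def gY {n g : ℕ} [NeZero n] [NeZero g] (i : Fin n) (p : Fin g) : SurfCoh n g :=
  if p = 0 ∧ i ≠ 0 then gB i p - gB 0 p else gB i p

/-- The relations defining the quotient algebra `A_g`: all products
`x_i(p)x_j(q)`, `x_i(p)y_j(q)`, `y_i(p)y_j(q)` with `p, q ≥ 2` and `i ≠ j` are set to zero. -/
inductive ARel (n g : ℕ) [NeZero n] [NeZero g] : SurfCoh n g → SurfCoh n g → Prop
  | xx (i j : Fin n) (p q : Fin g) : i ≠ j → p ≠ 0 → q ≠ 0 → ARel n g (gX i p * gX j q) 0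
  | xy (i j : Fin n) (p q : Fin g) : i ≠ j → p ≠ 0 → q ≠ 0 → ARel n g (gX i p * gY j q) 0
  | yy (i j : Fin n) (p q : Fin g) : i ≠ j → p ≠ 0 → q ≠ 0 → ARel n g (gY i p * gY j q) 0

/-- The algebra `A_g`: the quotient of `H^*(Σ_g^{×n}; ℚ)` by the ideal generated by the
products `x_i(p)x_j(q)`, `x_i(p)y_j(q)`, `y_i(p)y_j(q)` with `p, q ≥ 2`, `i ≠ j`. -/
def SurfA (n g : ℕ) [NeZero n] [NeZero g] : Type := RingQuot (ARel n g)

noncomputable instance (n g : ℕ) [NeZero n] [NeZero g] : Ring (SurfA n g) :=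
  inferInstanceAs (Ring (RingQuot (ARel n g)))

noncomputable instance (n g : ℕ) [NeZero n] [NeZero g] : Algebra ℚ (SurfA n g) :=
  inferInstanceAs (Algebra ℚ (RingQuot (ARel n g)))

/-- The quotient map `H^*(Σ_g^{×n}; ℚ) → A_g`. -/
noncomputable def toA (n g : ℕ) [NeZero n] [NeZero g] : SurfCoh n g →ₐ[ℚ] SurfA n g :=
  RingQuot.mkAlgHom ℚ (ARel n g)

/-- The image of `x_{i+1} = x_{i+1}(1)` in `A_g`. -/
noncomputable def xA {n g : ℕ} [NeZero n] [NeZero g] (i : Fin n) : SurfA n g :=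
  toA n g (gX i 0)

/-- The image of `y_{i+1} = y_{i+1}(1)` in `A_g`. -/
noncomputable def yA {n g : ℕ} [NeZero n] [NeZero g] (i : Fin n) : SurfA n g :=
  toA n g (gY i 0)

/-- The image of `ω_{i+1}` in `A_g`. -/
noncomputable def wA {n g : ℕ} [NeZero n] [NeZero g] (i : Fin n) : SurfA n g :=
  toA n g (gW i)

/-- The possible letters occurring in the `i`-th slot of a basis monomial:
`1`, `a_i(p)` (resp. `x_i(p)`), `b_i(p)` (resp. `y_i(p)`), or `ω_i`. -/
inductive Letter (g : ℕ) : Type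
  | one : Letter g
  | la (p : Fin g) : Letter g
  | lb (p : Fin g) : Letter g
  | lw : Letter g

/-- A letter is *exceptional* if it lies in `{a_i(p), b_i(p), ω_i : 2 ≤ p ≤ g}`
(resp. `{x_i(p), y_i(p), ω_i : 2 ≤ p ≤ g}`). -/
def Letter.isExc {g : ℕ} [NeZero g] : Letter g → Prop
  | .one => False
  | .la p => p ≠ 0
  | .lb p => p ≠ 0
  | .lw => True

/-- Evaluation of a letter in the `i`-th slot using the generators `a, b, ω`. -/
noncomputable def Letter.evalAB {n g : ℕ} (i : Fin n) : Letter g → SurfCoh n g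
  | .one => 1
  | .la p => gA i p
  | .lb p => gB i p
  | .lw => gW i

/-- Evaluation of a letter in the `i`-th slot using the classes `x, y, ω`. -/
noncomputable def Letter.evalXY {n g : ℕ} [NeZero n] [NeZero g] (i : Fin n) :
    Letter g → SurfCoh n g
  | .one => 1
  | .la p => gX i p
  | .lb p => gY i p
  | .lw => gW i

/-- The monomial `u_1 ⋯ u_n` in `H^*(Σ_g^{×n}; ℚ)` associated to a choice of letters, using the
generators `a, b, ω`. -/
noncomputable def monAB {n g : ℕ} (v : Fin n → Letter g) : SurfCoh n g :=
  (List.ofFn fun i : Fin n => (v i).evalAB i).prod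

/-- The monomial `v_1 ⋯ v_n` in `H^*(Σ_g^{×n}; ℚ)` associated to a choice of letters, using the
classes `x, y, ω`. -/
noncomputable def monXY {n g : ℕ} [NeZero n] [NeZero g] (v : Fin n → Letter g) : SurfCoh n g :=
  (List.ofFn fun i : Fin n => (v i).evalXY i).prod

/-- The proposed basis `β'₂` of `A_g`, indexed by monomials `v_1 ⋯ v_n` with each
`v_i ∈ {1, x_i(p), y_i(p), ω_i}` such that at most one `v_i` lies in
`{x_i(p), y_i(p), ω_i : 2 ≤ p ≤ g}`, mapped to their images in `A_g`. -/
noncomputable def basisFunXY (n g : ℕ) [NeZero n] [NeZero g]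
    (v : {v : Fin n → Letter g // {i : Fin n | (v i).isExc}.Subsingleton}) : SurfA n g :=
  toA n g (monXY v.1)

/-!
Spanning. Let `L i` be the span of the letters `1, a_i(p), b_i(p), ω_i`. The `L i` are idempotent
and commute, so their product is a subalgebra containing all generators, i.e. everything. Each
`x_i(p)` differs from `a_i(p)` by an element of `L 0` (and similarly for `y`), which is absorbed by
the factor `L 0` of that product; hence the monomials in `x, y, ω` span too. In `A_g` a monomial
with two exceptional letters vanishes: an exceptional letter is a multiple of one of degree one,
since `ω_i = a_i(r) b_i(r)` for some `r ≠ 0`, and Koszul signs let it be moved next to the other.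

Independence. Let `V` be the cohomology of one surface. The cohomology of the product acts on
`V^{⊗n}`, with Koszul signs carried by powers of the parity operator (as in the Jordan–Wigner
transformation). Multiplication never removes exceptional letters from a word, so it preserves the
span of the inadmissible words, and a product of two exceptional generators from different slots
maps all words into that span. Therefore `A_g` acts on the quotient, which is generated by the unit
word; so `dim A_g` is at least the number of admissible words, and a spanning family of that size is
independent.
-/

section Monoid

variable {M ι : Type*}

theorem pairwise_exists_mul_mul_ne_zero [MonoidWithZero M] {l : List M} (hl : l.prod ≠ 0) :
    l.Pairwise fun a b ↦ ∃ c, a * c * b ≠ 0 := by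
  induction l with
  | nil => exact .nil
  | cons a l ih =>
    rw [List.prod_cons] at hl
    refine .cons (fun b hb ↦ ?_) (ih (right_ne_zero_of_mul hl))
    obtain ⟨s, t, rfl⟩ := List.append_of_mem hb
    rw [List.prod_append, List.prod_cons, ← mul_assoc, ← mul_assoc] at hl
    exact ⟨s.prod, left_ne_zero_of_mul hl⟩

theorem isIdempotentElem_list_prod [Monoid M] {l : List M} (hid : ∀ a ∈ l, IsIdempotentElem a)
    (hcomm : l.Pairwise Commute) : IsIdempotentElem l.prod := by
  induction l with
  | nil => exact .one
  | cons a l ih =>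
    rw [List.forall_mem_cons] at hid
    rw [List.pairwise_cons] at hcomm
    rw [List.prod_cons]
    exact .mul_of_commute (.list_prod_right _ _ hcomm.1) hid.1 (ih hid.2 hcomm.2)

theorem mul_list_prod_map_congr [Monoid M] {e : M} {f f' : ι → M} (l : List ι)
    (hff' : ∀ i, e * f i = e * f' i) (hcomm : ∀ i, Commute e (f' i)) :
    e * (l.map f).prod = e * (l.map f').prod := by
  induction l with
  | nil => rfl
  | cons i l ih =>
    calc e * ((i :: l).map f).prod = f' i * (e * (l.map f).prod) := by
          rw [List.map_cons, List.prod_cons, ← mul_assoc, hff', (hcomm i).eq, mul_assoc]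
      _ = e * ((i :: l).map f').prod := by
          rw [ih, ← mul_assoc, ← (hcomm i).eq, mul_assoc, List.map_cons, List.prod_cons]

theorem mul_le_mul_of_le_sup [IdemSemiring M] {a b e : M} (he : IsIdempotentElem e)
    (hb : 1 ≤ b) (hab : a ≤ b ⊔ e) : e * a ≤ e * b := by
  calc e * a ≤ e * (b ⊔ e) := mul_le_mul_right hab e
    _ = e * b ⊔ e := by rw [← add_eq_sup, mul_add, he.eq, add_eq_sup]
    _ ≤ e * b := sup_le le_rfl (le_mul_of_one_le_right' hb)

end Monoid

section LinearAlgebra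

variable {R : Type*}

theorem list_prod_ofFn_span_range {A ι : Type*} [CommSemiring R] [Semiring A] [Algebra R A]
    {n : ℕ} (f : Fin n → ι → A) :
    (List.ofFn fun i ↦ Submodule.span R (Set.range (f i))).prod =
      Submodule.span R (Set.range fun v : Fin n → ι ↦ (List.ofFn fun i ↦ f i (v i)).prod) := by
  induction n with
  | zero => simp [Submodule.one_eq_span]
  | succ n ih =>
    rw [List.ofFn_succ, List.prod_cons, ih fun i ↦ f i.succ, Submodule.span_mul_span]
    congr 1
    ext x
    simp only [Set.mem_mul, Set.mem_range, exists_exists_eq_and, Fin.exists_fin_succ_pi,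
      List.ofFn_succ, List.prod_cons, Fin.cons_zero, Fin.cons_succ]

theorem linearIndependent_of_span_eq_top_of_surjective {V ι : Type*} [CommRing R] [AddCommGroup V]
    [Module R V] [Finite ι] {b : ι → V} (hb : Submodule.span R (Set.range b) = ⊤)
    {f : V →ₗ[R] ι → R} (hf : Function.Surjective f) : LinearIndependent R b := by
  cases nonempty_fintype ι
  have hsurj : Function.Surjective (Fintype.linearCombination R b) := by
    rw [← LinearMap.range_eq_top, Fintype.range_linearCombination, hb]
  have hinj : Function.Injective (f ∘ₗ Fintype.linearCombination R b) :=
    OrzechProperty.injective_of_surjective_endomorphism _ (hf.comp hsurj)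
  rw [linearIndependent_iff_injective_fintypeLinearCombination]
  exact .of_comp hinj

variable {m : Type*} [CommRing R] [Fintype m] [DecidableEq m]

/-- The subalgebra of square matrices whose block with rows in `p` and columns outside `p` is zero;
these are the matrices whose action on column vectors preserves the vectors vanishing on `p`. -/
def blockTriangularSubalgebra (R : Type*) [CommRing R] (p : m → Prop) :
    Subalgebra R (Matrix m m R) where
  carrier := {A | ∀ i j, A i j ≠ 0 → p i → p j}
  mul_mem' {A B} hA hB i j hij hi := by
    rw [Matrix.mul_apply] at hij
    obtain ⟨k, -, hk⟩ := Finset.exists_ne_zero_of_sum_ne_zero hij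
    exact hB k j (right_ne_zero_of_mul hk) (hA i k (left_ne_zero_of_mul hk) hi)
  add_mem' {A B} hA hB i j hij hi := by
    by_contra hj
    have hAij : A i j = 0 := of_not_not fun h ↦ hj (hA i j h hi)
    have hBij : B i j = 0 := of_not_not fun h ↦ hj (hB i j h hi)
    exact hij (by rw [Matrix.add_apply, hAij, hBij, add_zero])
  algebraMap_mem' c i j hij hi := by
    rw [Matrix.algebraMap_matrix_apply, ite_ne_right_iff] at hij
    exact hij.1 ▸ hi

/-- The diagonal block indexed by `p` of a block triangular matrix. It is the matrix of the action
induced on the quotient by the vectors vanishing on `p`, hence multiplicative. -/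
def diagonalBlockHom (p : m → Prop) [DecidablePred p] :
    blockTriangularSubalgebra R p →ₐ[R] Matrix {i // p i} {i // p i} R where
  toFun A := A.1.toSquareBlockProp p
  map_one' := Matrix.submatrix_one _ Subtype.val_injective
  map_mul' A B := by
    have hA : A.1.toBlock p (fun i ↦ ¬p i) = 0 := by
      ext i j
      exact of_not_not fun h ↦ j.2 (A.2 i j h i.2)
    refine (Matrix.toBlock_mul_eq_add p p p A.1 B.1).trans ?_
    rw [hA, Matrix.zero_mul, add_zero]
    rfl
  map_zero' := rfl
  map_add' _ _ := rfl
  commutes' c := by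
    ext i j
    simp [Matrix.toSquareBlockProp_def, Matrix.algebraMap_matrix_apply, Subtype.ext_iff]

end LinearAlgebra

section JordanWigner

variable {ι R : Type*} [Fintype ι] [CommRing R]

/-- The Kronecker product of a finite family of matrices. -/
def piKronecker {κ μ : ι → Type*} (T : ∀ k, Matrix (κ k) (μ k) R) :
    Matrix (∀ k, κ k) (∀ k, μ k) R :=
  .of fun v w ↦ ∏ k, T k (v k) (w k)

theorem piKronecker_apply {κ μ : ι → Type*} (T : ∀ k, Matrix (κ k) (μ k) R) (v : ∀ k, κ k)
    (w : ∀ k, μ k) : piKronecker T v w = ∏ k, T k (v k) (w k) :=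
  rfl

theorem piKronecker_mul [DecidableEq ι] {κ μ ν : ι → Type*} [∀ k, Fintype (μ k)]
    (S : ∀ k, Matrix (κ k) (μ k) R) (T : ∀ k, Matrix (μ k) (ν k) R) :
    piKronecker S * piKronecker T = piKronecker fun k ↦ S k * T k := by
  ext v w
  simp only [piKronecker_apply, Matrix.mul_apply, Fintype.prod_sum, Finset.prod_mul_distrib]

theorem piKronecker_eq_smul {κ μ : ι → Type*} {S T : ∀ k, Matrix (κ k) (μ k) R}
    {c : R} (i : ι) (hi : S i = c • T i) (h : ∀ k, k ≠ i → S k = T k) :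
    piKronecker S = c • piKronecker T := by
  classical
  ext v w
  simp only [piKronecker_apply, Matrix.smul_apply, smul_eq_mul]
  rw [Fintype.prod_eq_mul_prod_compl i, Fintype.prod_eq_mul_prod_compl i, hi, Matrix.smul_apply,
    smul_eq_mul, mul_assoc]
  congr 2
  exact Finset.prod_congr rfl fun k hk ↦ by rw [h k (by simpa using hk)]

theorem piKronecker_col_eq_single {κ : ι → Type*} [∀ k, DecidableEq (κ k)]
    {T : ∀ k, Matrix (κ k) (κ k) R} {v w : ∀ k, κ k} {c : ι → R}
    (h : ∀ k, (T k).col (w k) = Pi.single (v k) (c k)) :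
    (piKronecker T).col w = Pi.single v (∏ k, c k) := by
  have hT (x : ∀ k, κ k) (k : ι) : T k (x k) (w k) = if x k = v k then c k else 0 := by
    rw [← Pi.single_apply, ← h k, Matrix.col_apply]
  ext x
  rw [Matrix.col_apply, piKronecker_apply, Pi.single_apply]
  simp only [hT]
  split_ifs with hx
  · simp [hx]
  · obtain ⟨k, hk⟩ := Function.ne_iff.1 hx
    exact Finset.prod_eq_zero (Finset.mem_univ k) (if_neg hk)

variable {κ : Type*} [Fintype κ] [DecidableEq κ] [LinearOrder ι]

/-- The Jordan–Wigner operator acting by `T` in slot `i` of the tensor power indexed by `ι`; the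
factor `s ^ d` in every earlier slot produces the Koszul sign for moving an operator of degree `d`
past those slots when `s` is the parity operator. -/
def jordanWigner (s : Matrix κ κ R) (d : ℕ) (i : ι) (T : Matrix κ κ R) :
    Matrix (ι → κ) (ι → κ) R :=
  piKronecker fun k ↦ if k < i then s ^ d else if k = i then T else 1

theorem jordanWigner_mul_same (s : Matrix κ κ R) (d e : ℕ) (i : ι) (S T : Matrix κ κ R) :
    jordanWigner s d i S * jordanWigner s e i T = jordanWigner s (d + e) i (S * T) := by
  simp only [jordanWigner, piKronecker_mul]
  congr 1
  ext1 k
  split_ifs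
  exacts [(pow_add s d e).symm, rfl, one_mul 1]

theorem jordanWigner_smul (s : Matrix κ κ R) (d : ℕ) (i : ι) (c : R) (T : Matrix κ κ R) :
    jordanWigner s d i (c • T) = c • jordanWigner s d i T :=
  piKronecker_eq_smul i (by simp) fun k hk ↦ by simp [hk]

theorem jordanWigner_zero (s : Matrix κ κ R) (d : ℕ) (i : ι) : jordanWigner s d i 0 = 0 := by
  simpa using jordanWigner_smul s d i 0 0

theorem mul_pow_of_mul_eq_neg_one_pow_smul {s T : Matrix κ κ R} {d : ℕ}
    (h : T * s = (-1 : R) ^ d • (s * T)) (e : ℕ) :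
    T * s ^ e = (-1 : R) ^ (d * e) • (s ^ e * T) := by
  have hsemi : SemiconjBy T s ((-1 : R) ^ d • s) := by rw [SemiconjBy, h, smul_mul_assoc]
  rw [(hsemi.pow_right e).eq, smul_pow, ← pow_mul, smul_mul_assoc]

theorem jordanWigner_mul_of_lt {s S : Matrix κ κ R} {d : ℕ} (h : S * s = (-1 : R) ^ d • (s * S))
    (e : ℕ) (T : Matrix κ κ R) {i j : ι} (hij : i < j) :
    jordanWigner s d i S * jordanWigner s e j T =
      (-1 : R) ^ (d * e) • (jordanWigner s e j T * jordanWigner s d i S) := by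
  simp only [jordanWigner, piKronecker_mul]
  refine piKronecker_eq_smul i ?_ fun k hk ↦ ?_
  · simp [hij, mul_pow_of_mul_eq_neg_one_pow_smul h]
  · rcases lt_or_gt_of_ne hk with hki | hik
    · simp [hki, hki.trans hij, ← pow_add, add_comm]
    · simp [hik.not_gt, hk]

theorem jordanWigner_mul_of_ne {s S T : Matrix κ κ R} {d e : ℕ}
    (hS : S * s = (-1 : R) ^ d • (s * S)) (hT : T * s = (-1 : R) ^ e • (s * T)) {i j : ι}
    (hij : i ≠ j) :
    jordanWigner s d i S * jordanWigner s e j T =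
      (-1 : R) ^ (d * e) • (jordanWigner s e j T * jordanWigner s d i S) := by
  rcases lt_or_gt_of_ne hij with hlt | hgt
  · exact jordanWigner_mul_of_lt hS e T hlt
  · rw [jordanWigner_mul_of_lt hT d S hgt, smul_smul, mul_comm e d, ← mul_pow]
    simp

theorem apply_ne_zero_of_jordanWigner_diagonal_apply_ne_zero {σ : κ → R} {d : ℕ} {i : ι}
    {T : Matrix κ κ R} {v w : ι → κ} (h : jordanWigner (.diagonal σ) d i T v w ≠ 0) :
    T (v i) (w i) ≠ 0 ∧ ∀ k, k ≠ i → v k = w k := by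
  rw [jordanWigner, piKronecker_apply] at h
  have hfactor (k : ι) := ne_zero_of_dvd_ne_zero h (Finset.dvd_prod_of_mem _ (Finset.mem_univ k))
  refine ⟨by simpa using hfactor i, fun k hk ↦ of_not_not fun hvw ↦ hfactor k ?_⟩
  split_ifs
  · rw [Matrix.diagonal_pow, Matrix.diagonal_apply_ne _ hvw]
  · exact Matrix.one_apply_ne hvw

theorem jordanWigner_diagonal_col (σ : κ → R) (d : ℕ) {i : ι} {T : Matrix κ κ R} {w : ι → κ}
    {x : κ} (h : T.col (w i) = Pi.single x 1) :
    (jordanWigner (.diagonal σ) d i T).col w =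
      Pi.single (Function.update w i x) (∏ k, if k < i then σ (w k) ^ d else 1) := by
  refine piKronecker_col_eq_single fun k ↦ ?_
  rcases lt_trichotomy k i with hki | rfl | hik
  · simp only [hki, if_true, Function.update_of_ne hki.ne, Matrix.diagonal_pow, Matrix.col_diagonal,
      Pi.pow_apply]
  · simpa only [lt_irrefl, if_false, if_true, Function.update_self] using h
  · simp only [hik.not_gt, hik.ne', if_false, Function.update_of_ne hik.ne', ← Matrix.diagonal_one,
      Matrix.col_diagonal]

end JordanWigner

/-! ### Monomials in `x`, `y`, `ω` span the cohomology -/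

namespace SurfGen

variable {n g : ℕ}

/-- The factor of the product surface from which a generator is pulled back. -/
def slot : SurfGen n g → Fin n
  | a i _ => i
  | b i _ => i
  | w i => i

/-- A generator as a letter, forgetting its slot. -/
def letter : SurfGen n g → Letter g
  | a _ p => .la p
  | b _ p => .lb p
  | w _ => .lw

theorem exists_slot_eq_letter_eq (i : Fin n) {l : Letter g} (hl : l ≠ .one) :
    ∃ u : SurfGen n g, u.slot = i ∧ u.letter = l := by
  cases l with
  | one => exact absurd rfl hl
  | la p => exact ⟨a i p, rfl, rfl⟩
  | lb p => exact ⟨b i p, rfl, rfl⟩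
  | lw => exact ⟨w i, rfl, rfl⟩

end SurfGen

theorem Letter.isExc.ne_one {g : ℕ} [NeZero g] {l : Letter g} (hl : l.isExc) : l ≠ .one := by
  rintro rfl
  exact hl

namespace SurfCoh

variable {n g : ℕ}

/-- The projection onto `SurfCoh n g` from the free algebra on the generators. -/
noncomputable def mk (n g : ℕ) : FreeAlgebra ℚ (SurfGen n g) →ₐ[ℚ] SurfCoh n g :=
  RingQuot.mkAlgHom ℚ (SurfRel n g)

theorem mk_surjective : Function.Surjective (mk n g) :=
  RingQuot.mkAlgHom_surjective ℚ _

theorem mk_eq_of_surfRel {x y : FreeAlgebra ℚ (SurfGen n g)} (h : SurfRel n g x y) :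
    mk n g x = mk n g y :=
  RingQuot.mkAlgHom_rel ℚ h

/-- The class of a generator; on `a i p`, `b i p` and `w i` it is by definition `gA i p`, `gB i p`
and `gW i`. -/
noncomputable def gen (u : SurfGen n g) : SurfCoh n g :=
  mk n g (FreeAlgebra.ι ℚ u)

/-- The universal property of `SurfCoh n g`. -/
noncomputable def lift {B : Type*} [Ring B] [Algebra ℚ B] (f : SurfGen n g → B)
    (hf : ∀ ⦃x y⦄, SurfRel n g x y → FreeAlgebra.lift ℚ f x = FreeAlgebra.lift ℚ f y) :
    SurfCoh n g →ₐ[ℚ] B :=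
  RingQuot.liftAlgHom ℚ ⟨FreeAlgebra.lift ℚ f, hf⟩

theorem lift_gen {B : Type*} [Ring B] [Algebra ℚ B] {f : SurfGen n g → B}
    (hf : ∀ ⦃x y⦄, SurfRel n g x y → FreeAlgebra.lift ℚ f x = FreeAlgebra.lift ℚ f y)
    (u : SurfGen n g) : lift f hf (gen u) = f u :=
  (RingQuot.liftAlgHom_mkAlgHom_apply ℚ _ hf _).trans (FreeAlgebra.lift_ι_apply f u)

theorem adjoin_range_gen : Algebra.adjoin ℚ (Set.range (gen : SurfGen n g → _)) = ⊤ := by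
  have hrange : Set.range (gen : SurfGen n g → _) = mk n g '' Set.range (FreeAlgebra.ι ℚ) :=
    Set.range_comp (mk n g) _
  rw [hrange, Algebra.adjoin_image, FreeAlgebra.adjoin_range_ι, Algebra.map_top]
  exact (AlgHom.range_eq_top _).2 mk_surjective

theorem evalAB_letter (u : SurfGen n g) : u.letter.evalAB u.slot = gen u := by
  cases u <;> rfl

section Relations

theorem gen_mul_gen (u v : SurfGen n g) :
    gen u * gen v = (-1 : ℚ) ^ (u.deg * v.deg) • (gen v * gen u) := by
  have h := mk_eq_of_surfRel (.koszul u v)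
  rwa [map_mul, map_smul, map_mul] at h

theorem gA_mul_gA (i : Fin n) (p q : Fin g) : gA i p * gA i q = 0 := by
  have h := mk_eq_of_surfRel (.aa i p q)
  rwa [map_mul, map_zero] at h

theorem gB_mul_gB (i : Fin n) (p q : Fin g) : gB i p * gB i q = 0 := by
  have h := mk_eq_of_surfRel (.bb i p q)
  rwa [map_mul, map_zero] at h

theorem gA_mul_gB (i : Fin n) (p q : Fin g) : gA i p * gB i q = if p = q then gW i else 0 := by
  split_ifs with hpq
  · subst hpq
    have h := mk_eq_of_surfRel (.ab_eq i p)
    rwa [map_mul] at h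
  · have h := mk_eq_of_surfRel (.ab_ne i p q hpq)
    rwa [map_mul, map_zero] at h

theorem gB_mul_gA (i j : Fin n) (p q : Fin g) : gB i p * gA j q = -(gA j q * gB i p) := by
  have h := gen_mul_gen (.b i p) (.a j q)
  rwa [SurfGen.deg, SurfGen.deg, mul_one, pow_one, neg_one_smul] at h

theorem gW_mul_gen (i : Fin n) (u : SurfGen n g) : gW i * gen u = gen u * gW i := by
  have h := gen_mul_gen (.w i) u
  rwa [SurfGen.deg, pow_mul, neg_one_sq, one_pow, one_smul] at h

theorem gW_eq_gA_mul_gB (i : Fin n) (p : Fin g) : gW i = gA i p * gB i p := by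
  rw [gA_mul_gB, if_pos rfl]

theorem gA_mul_gW (i : Fin n) (p : Fin g) : gA i p * gW i = 0 := by
  rw [gW_eq_gA_mul_gB i p, ← mul_assoc, gA_mul_gA, zero_mul]

theorem gW_mul_gB (i : Fin n) (p : Fin g) : gW i * gB i p = 0 := by
  rw [gW_eq_gA_mul_gB i p, mul_assoc, gB_mul_gB, mul_zero]

theorem gW_mul_gA (i : Fin n) (p : Fin g) : gW i * gA i p = 0 :=
  (gW_mul_gen i (.a i p)).trans (gA_mul_gW i p)

theorem gB_mul_gW (i : Fin n) (p : Fin g) : gB i p * gW i = 0 :=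
  (gW_mul_gen i (.b i p)).symm.trans (gW_mul_gB i p)

theorem gW_mul_gW [NeZero g] (i : Fin n) : (gW i * gW i : SurfCoh n g) = 0 := by
  nth_rw 1 [gW_eq_gA_mul_gB i 0]
  rw [mul_assoc, gB_mul_gW, mul_zero]

end Relations

theorem exists_gen_mul_eq_mul_gen (u : SurfGen n g) (z : SurfCoh n g) :
    ∃ z', gen u * z = z' * gen u := by
  have hz : z ∈ Algebra.adjoin ℚ (Set.range (gen : SurfGen n g → SurfCoh n g)) :=
    adjoin_range_gen ▸ Algebra.mem_top
  induction hz using Algebra.adjoin_induction with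
  | mem x hx =>
    obtain ⟨v, rfl⟩ := hx
    exact ⟨(-1 : ℚ) ^ (u.deg * v.deg) • gen v, by rw [gen_mul_gen, smul_mul_assoc]⟩
  | algebraMap r => exact ⟨algebraMap ℚ _ r, (Algebra.commutes r (gen u)).symm⟩
  | add x y _ _ hx hy =>
    obtain ⟨x', hx⟩ := hx
    obtain ⟨y', hy⟩ := hy
    exact ⟨x' + y', by rw [mul_add, hx, hy, add_mul]⟩
  | mul x y _ _ hx hy =>
    obtain ⟨x', hx⟩ := hx
    obtain ⟨y', hy⟩ := hy
    exact ⟨x' * y', by rw [← mul_assoc, hx, mul_assoc, hy, mul_assoc]⟩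

theorem exists_deg_eq_one_gen_eq_mul [NeZero g] (hg : 2 ≤ g)
    {u : SurfGen n g} (hu : u.letter.isExc) :
    ∃ e : SurfGen n g, e.letter.isExc ∧ e.deg = 1 ∧ e.slot = u.slot ∧
      (∃ c, gen u = c * gen e) ∧ ∃ c, gen u = gen e * c := by
  cases u with
  | a i p => exact ⟨.a i p, hu, rfl, rfl, ⟨1, (one_mul _).symm⟩, 1, (mul_one _).symm⟩
  | b i p => exact ⟨.b i p, hu, rfl, rfl, ⟨1, (one_mul _).symm⟩, 1, (mul_one _).symm⟩
  | w i =>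
    have : Nontrivial (Fin g) := Fin.nontrivial_iff_two_le.2 hg
    obtain ⟨r, hr⟩ := exists_ne (0 : Fin g)
    refine ⟨.a i r, hr, rfl, rfl, ⟨-gB i r, ?_⟩, gB i r, gW_eq_gA_mul_gB i r⟩
    calc gW i = gA i r * gB i r := gW_eq_gA_mul_gB i r
      _ = -gB i r * gA i r := by rw [neg_mul, gB_mul_gA, neg_neg]

section Spanning

/-- The span of `1`, `a_i(p)`, `b_i(p)` and `ω_i`, i.e. the cohomology of the `i`-th factor. -/
noncomputable def spanAB (g : ℕ) (i : Fin n) : Submodule ℚ (SurfCoh n g) :=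
  Submodule.span ℚ (Set.range fun l : Letter g ↦ l.evalAB i)

theorem evalAB_mem_spanAB (i : Fin n) (l : Letter g) : l.evalAB i ∈ spanAB g i :=
  Submodule.subset_span ⟨l, rfl⟩

theorem one_le_spanAB (i : Fin n) : 1 ≤ spanAB g i :=
  Submodule.one_le.2 (evalAB_mem_spanAB i .one)

theorem isIdempotentElem_spanAB [NeZero g] (i : Fin n) : IsIdempotentElem (spanAB g i) := by
  refine le_antisymm ?_ (le_mul_of_one_le_right' (one_le_spanAB i))
  conv_lhs => rw [spanAB, Submodule.span_mul_span]
  rw [Submodule.span_le]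
  rintro _ ⟨_, ⟨l, rfl⟩, _, ⟨m, rfl⟩, rfl⟩
  have hl := evalAB_mem_spanAB i l
  have hm := evalAB_mem_spanAB i m
  have hw : (gW i : SurfCoh n g) ∈ spanAB g i := evalAB_mem_spanAB i .lw
  cases l <;> cases m <;>
    simp only [SetLike.mem_coe, Letter.evalAB, one_mul, mul_one, gA_mul_gA, gA_mul_gB, gB_mul_gA,
      gB_mul_gB, gA_mul_gW, gB_mul_gW, gW_mul_gA, gW_mul_gB, gW_mul_gW, neg_mem_iff, zero_mem]
      at hl hm ⊢ <;>
    first | assumption | (split_ifs; exacts [hw, zero_mem _])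

theorem evalAB_mul_evalAB (i j : Fin n) (l m : Letter g) :
    ∃ c : ℚ, l.evalAB i * m.evalAB j = c • (m.evalAB j * l.evalAB i) := by
  rcases eq_or_ne l .one with rfl | hl
  · exact ⟨1, by simp [Letter.evalAB]⟩
  rcases eq_or_ne m .one with rfl | hm
  · exact ⟨1, by simp [Letter.evalAB]⟩
  obtain ⟨u, rfl, rfl⟩ := SurfGen.exists_slot_eq_letter_eq i hl
  obtain ⟨v, rfl, rfl⟩ := SurfGen.exists_slot_eq_letter_eq j hm
  exact ⟨_, by simpa only [evalAB_letter] using gen_mul_gen u v⟩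

theorem commute_spanAB (i j : Fin n) : Commute (spanAB g i) (spanAB g j) := by
  have hle (i j : Fin n) : spanAB g i * spanAB g j ≤ spanAB g j * spanAB g i := by
    conv_lhs => rw [spanAB, spanAB, Submodule.span_mul_span]
    rw [Submodule.span_le]
    rintro _ ⟨_, ⟨l, rfl⟩, _, ⟨m, rfl⟩, rfl⟩
    obtain ⟨c, hc⟩ := evalAB_mul_evalAB i j l m
    change l.evalAB i * m.evalAB j ∈ spanAB g j * spanAB g i
    rw [hc]
    exact Submodule.smul_mem _ c <|
      Submodule.mul_mem_mul (evalAB_mem_spanAB j m) (evalAB_mem_spanAB i l)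
  exact le_antisymm (hle i j) (hle j i)

theorem list_prod_ofFn_spanAB [NeZero g] :
    (List.ofFn (spanAB g : Fin n → Submodule ℚ (SurfCoh n g))).prod = ⊤ := by
  set Q := (List.ofFn (spanAB g : Fin n → Submodule ℚ (SurfCoh n g))).prod
  have hle (i : Fin n) : spanAB g i ≤ Q := by
    have hsub : [spanAB g i].Sublist (List.ofFn (spanAB (n := n) g)) :=
      List.singleton_sublist.2 (List.mem_ofFn.2 ⟨i, rfl⟩)
    simpa using hsub.prod_le_prod' (by simpa using one_le_spanAB)
  have hone : 1 ≤ Q := List.one_le_prod_of_one_le (by simpa using one_le_spanAB)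
  have hidem : IsIdempotentElem Q :=
    isIdempotentElem_list_prod (by simpa using isIdempotentElem_spanAB)
      (List.pairwise_ofFn.2 fun i j _ ↦ commute_spanAB i j)
  let S : Subalgebra ℚ (SurfCoh n g) :=
    Q.toSubalgebra (Submodule.one_le.1 hone) fun _ _ hx hy ↦ hidem.le (Submodule.mul_mem_mul hx hy)
  have hS : S = ⊤ := by
    rw [eq_top_iff, ← adjoin_range_gen, Algebra.adjoin_le_iff]
    rintro _ ⟨u, rfl⟩
    exact hle u.slot (evalAB_letter u ▸ evalAB_mem_spanAB u.slot u.letter)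
  exact eq_top_iff.2 fun x _ ↦ (hS ▸ Algebra.mem_top : x ∈ S)

variable [NeZero n] [NeZero g]

/-- The span of `1`, `x_i(p)`, `y_i(p)` and `ω_i`. -/
noncomputable def spanXY (g : ℕ) [NeZero g] (i : Fin n) : Submodule ℚ (SurfCoh n g) :=
  Submodule.span ℚ (Set.range fun l : Letter g ↦ l.evalXY i)

theorem evalXY_mem_spanXY (i : Fin n) (l : Letter g) : l.evalXY i ∈ spanXY g i :=
  Submodule.subset_span ⟨l, rfl⟩

theorem one_le_spanXY (i : Fin n) : 1 ≤ spanXY g i :=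
  Submodule.one_le.2 (evalXY_mem_spanXY i .one)

theorem evalXY_eq_evalAB_or (i : Fin n) (l : Letter g) :
    (l.evalXY i : SurfCoh n g) = l.evalAB i ∨
      (l.evalXY i : SurfCoh n g) = l.evalAB i - l.evalAB 0 := by
  cases l with
  | one | lw => exact .inl rfl
  | la p => simp only [Letter.evalXY, Letter.evalAB, gX]; split_ifs <;> simp
  | lb p => simp only [Letter.evalXY, Letter.evalAB, gY]; split_ifs <;> simp

theorem spanXY_zero : spanXY g (0 : Fin n) = spanAB g 0 := by
  have heval : (fun l : Letter g ↦ l.evalXY (0 : Fin n)) = fun l ↦ l.evalAB 0 := by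
    ext1 l
    cases l <;> simp [Letter.evalXY, Letter.evalAB, gX, gY]
  rw [spanXY, spanAB, heval]

theorem spanXY_le (i : Fin n) : spanXY g i ≤ spanAB g i ⊔ spanAB g 0 := by
  refine Submodule.span_le.2 ?_
  rintro _ ⟨l, rfl⟩
  have hl := Submodule.mem_sup_left (T := spanAB g 0) (evalAB_mem_spanAB i l)
  have hl₀ := Submodule.mem_sup_right (S := spanAB g i) (evalAB_mem_spanAB 0 l)
  rcases evalXY_eq_evalAB_or i l with h | h
  · rwa [← h] at hl
  · simpa only [h, SetLike.mem_coe] using sub_mem hl hl₀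

theorem spanAB_le (i : Fin n) : spanAB g i ≤ spanXY g i ⊔ spanAB g 0 := by
  refine Submodule.span_le.2 ?_
  rintro _ ⟨l, rfl⟩
  have hl := Submodule.mem_sup_left (T := spanAB g 0) (evalXY_mem_spanXY i l)
  have hl₀ := Submodule.mem_sup_right (S := spanXY g i) (evalAB_mem_spanAB 0 l)
  rcases evalXY_eq_evalAB_or i l with h | h
  · rwa [h] at hl
  · simpa only [h, sub_add_cancel, SetLike.mem_coe] using add_mem hl hl₀

theorem spanAB_zero_mul_spanXY (i : Fin n) :
    spanAB g 0 * spanXY g i = spanAB g 0 * spanAB g i :=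
  have hidem := isIdempotentElem_spanAB (g := g) (0 : Fin n)
  le_antisymm (mul_le_mul_of_le_sup hidem (one_le_spanAB i) (spanXY_le i))
    (mul_le_mul_of_le_sup hidem (one_le_spanXY i) (spanAB_le i))

theorem list_prod_ofFn_spanXY :
    (List.ofFn (spanXY g : Fin n → Submodule ℚ (SurfCoh n g))).prod = ⊤ := by
  obtain ⟨m, rfl⟩ := Nat.exists_eq_succ_of_ne_zero (NeZero.ne n)
  calc (List.ofFn (spanXY (n := m + 1) g)).prod
      = spanAB g 0 * ((List.ofFn Fin.succ).map (spanXY g)).prod := by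
        rw [List.ofFn_succ, List.prod_cons, spanXY_zero, List.map_ofFn]; rfl
    _ = spanAB g 0 * ((List.ofFn Fin.succ).map (spanAB g)).prod :=
        mul_list_prod_map_congr _ spanAB_zero_mul_spanXY (commute_spanAB 0)
    _ = (List.ofFn (spanAB (n := m + 1) g)).prod := by
        rw [List.ofFn_succ, List.prod_cons, List.map_ofFn]; rfl
    _ = ⊤ := list_prod_ofFn_spanAB

theorem span_range_monXY :
    Submodule.span ℚ (Set.range (monXY : (Fin n → Letter g) → SurfCoh n g)) = ⊤ :=
  (list_prod_ofFn_span_range fun i (l : Letter g) ↦ (l.evalXY i : SurfCoh n g)).symm.trans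
    list_prod_ofFn_spanXY

end Spanning

end SurfCoh

/-! ### Vanishing of inadmissible monomials -/

namespace SurfA

open SurfCoh

variable {n g : ℕ} [NeZero n] [NeZero g]

/-- The words indexing the basis: those with at most one exceptional letter. -/
abbrev IsAdmissible (v : Fin n → Letter g) : Prop :=
  {i | (v i).isExc}.Subsingleton

/-- The index type of the basis. -/
abbrev AdmissibleWord (n g : ℕ) [NeZero g] : Type :=
  {v : Fin n → Letter g // IsAdmissible v}

theorem toA_surjective : Function.Surjective (toA n g) :=
  RingQuot.mkAlgHom_surjective ℚ _

theorem toA_eq_zero_of_aRel {x : SurfCoh n g} (h : ARel n g x 0) : toA n g x = 0 :=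
  (RingQuot.mkAlgHom_rel ℚ h).trans (map_zero (toA n g))

/-- The universal property of `SurfA n g` as a quotient of `SurfCoh n g`. -/
noncomputable def lift {B : Type*} [Ring B] [Algebra ℚ B] (f : SurfCoh n g →ₐ[ℚ] B)
    (hf : ∀ ⦃x y⦄, ARel n g x y → f x = f y) : SurfA n g →ₐ[ℚ] B :=
  RingQuot.liftAlgHom ℚ ⟨f, hf⟩

theorem lift_toA {B : Type*} [Ring B] [Algebra ℚ B] {f : SurfCoh n g →ₐ[ℚ] B}
    (hf : ∀ ⦃x y⦄, ARel n g x y → f x = f y) (x : SurfCoh n g) : lift f hf (toA n g x) = f x :=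
  RingQuot.liftAlgHom_mkAlgHom_apply ℚ f hf x

theorem gX_of_ne_zero (i : Fin n) {p : Fin g} (hp : p ≠ 0) : gX i p = gA i p :=
  if_neg fun h ↦ hp h.1

theorem gY_of_ne_zero (i : Fin n) {p : Fin g} (hp : p ≠ 0) : gY i p = gB i p :=
  if_neg fun h ↦ hp h.1

theorem evalXY_letter_of_isExc {u : SurfGen n g} (hu : u.letter.isExc) :
    u.letter.evalXY u.slot = gen u := by
  cases u with
  | a i p => exact gX_of_ne_zero i hu
  | b i p => exact gY_of_ne_zero i hu
  | w i => rfl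

theorem toA_gen_mul_gen_of_deg_eq_one {u v : SurfGen n g} (hu : u.letter.isExc)
    (hv : v.letter.isExc) (hdu : u.deg = 1) (hdv : v.deg = 1) (huv : u.slot ≠ v.slot) :
    toA n g (gen u * gen v) = 0 := by
  have hXY (i j : Fin n) (p q : Fin g) (hij : i ≠ j) (hp : p ≠ 0) (hq : q ≠ 0) :
      toA n g (gA i p * gB j q) = 0 := by
    rw [← gX_of_ne_zero i hp, ← gY_of_ne_zero j hq]
    exact toA_eq_zero_of_aRel (.xy i j p q hij hp hq)
  cases u with
  | w i => cases hdu
  | a i p => cases v with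
    | w j => cases hdv
    | a j q =>
      have h := toA_eq_zero_of_aRel (.xx i j p q huv hu hv)
      rwa [gX_of_ne_zero i hu, gX_of_ne_zero j hv] at h
    | b j q => exact hXY i j p q huv hu hv
  | b i p => cases v with
    | w j => cases hdv
    | a j q =>
      change toA n g (gB i p * gA j q) = 0
      rw [gB_mul_gA, map_neg, hXY j i q p huv.symm hv hu, neg_zero]
    | b j q =>
      have h := toA_eq_zero_of_aRel (.yy i j p q huv hu hv)
      rwa [gY_of_ne_zero i hu, gY_of_ne_zero j hv] at h

theorem toA_gen_mul_mul_gen (hg : 2 ≤ g) {u v : SurfGen n g} (hu : u.letter.isExc)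
    (hv : v.letter.isExc) (huv : u.slot ≠ v.slot) (z : SurfCoh n g) :
    toA n g (gen u * z * gen v) = 0 := by
  obtain ⟨e, he, hde, hse, ⟨c, hc⟩, -⟩ := exists_deg_eq_one_gen_eq_mul hg hu
  obtain ⟨f, hf, hdf, hsf, -, d, hd⟩ := exists_deg_eq_one_gen_eq_mul hg hv
  obtain ⟨z', hz'⟩ := exists_gen_mul_eq_mul_gen e z
  have hfactor : gen u * z * gen v = c * z' * (gen e * gen f) * d := by
    rw [hc, hd, mul_assoc c, hz']
    simp only [mul_assoc]
  rw [hfactor, map_mul, map_mul,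
    toA_gen_mul_gen_of_deg_eq_one he hf hde hdf (by rwa [hse, hsf]), mul_zero, zero_mul]

theorem toA_evalXY_mul_mul_toA_evalXY (hg : 2 ≤ g) {l m : Letter g} (hl : l.isExc) (hm : m.isExc)
    {i j : Fin n} (hij : i ≠ j) (c : SurfA n g) :
    toA n g (l.evalXY i) * c * toA n g (m.evalXY j) = 0 := by
  obtain ⟨z, rfl⟩ := toA_surjective c
  obtain ⟨u, rfl, rfl⟩ := SurfGen.exists_slot_eq_letter_eq i hl.ne_one
  obtain ⟨v, rfl, rfl⟩ := SurfGen.exists_slot_eq_letter_eq j hm.ne_one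
  rw [evalXY_letter_of_isExc hl, evalXY_letter_of_isExc hm, ← map_mul, ← map_mul]
  exact toA_gen_mul_mul_gen hg hl hm hij z

theorem isAdmissible_of_toA_monXY_ne_zero (hg : 2 ≤ g) {v : Fin n → Letter g}
    (hv : toA n g (monXY v) ≠ 0) : IsAdmissible v := by
  rw [monXY, map_list_prod, List.map_ofFn] at hv
  have hpair := List.pairwise_ofFn.1 (pairwise_exists_mul_mul_ne_zero hv)
  have hlt (i j : Fin n) (hij : i < j) (hi : (v i).isExc) (hj : (v j).isExc) : False :=
    have ⟨c, hc⟩ := hpair hij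
    hc (toA_evalXY_mul_mul_toA_evalXY hg hi hj hij.ne c)
  intro i hi j hj
  by_contra hij
  rcases lt_or_gt_of_ne hij with h | h
  exacts [hlt i j h hi hj, hlt j i h hj hi]

theorem span_range_basisFunXY (hg : 2 ≤ g) :
    Submodule.span ℚ (Set.range (basisFunXY n g)) = ⊤ := by
  have hmap : (Submodule.span ℚ (Set.range monXY)).map (toA n g).toLinearMap = ⊤ := by
    rw [span_range_monXY, Submodule.map_top, LinearMap.range_eq_top]
    exact toA_surjective
  rw [eq_top_iff, ← hmap, Submodule.map_span, Submodule.span_le]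
  rintro _ ⟨_, ⟨v, rfl⟩, rfl⟩
  by_cases hv : toA n g (monXY v) = 0
  · exact hv ▸ zero_mem _
  · exact Submodule.subset_span ⟨⟨v, isAdmissible_of_toA_monXY_ne_zero hg hv⟩, rfl⟩

end SurfA

/-! ### The action on the tensor power -/

namespace Letter

variable {g : ℕ}

/-- A letter as an element of a sum type, from which finiteness and decidable equality of letters
are transported; `inl false` is `1` and `inl true` is `ω`. -/
def equivSum (g : ℕ) : Letter g ≃ Bool ⊕ Fin g ⊕ Fin g where
  toFun
    | .one => .inl false
    | .lw => .inl true
    | .la p => .inr (.inl p)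
    | .lb p => .inr (.inr p)
  invFun
    | .inl false => .one
    | .inl true => .lw
    | .inr (.inl p) => .la p
    | .inr (.inr p) => .lb p
  left_inv l := by cases l <;> rfl
  right_inv x := by rcases x with (_ | _) | _ | _ <;> rfl

instance : DecidableEq (Letter g) :=
  (equivSum g).decidableEq

instance : Fintype (Letter g) :=
  .ofEquiv _ (equivSum g).symm

/-- The cohomological degree of a letter. -/
def deg : Letter g → ℕ
  | .one => 0
  | .la _ => 1
  | .lb _ => 1
  | .lw => 2

/-- The operator of left multiplication by a letter on the cohomology of one factor, as a matrix in
the basis of letters. -/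
def mulMatrix : Letter g → Matrix (Letter g) (Letter g) ℚ
  | .one => 1
  | .la p => .single (.la p) .one 1 + .single .lw (.lb p) 1
  | .lb p => .single (.lb p) .one 1 - .single .lw (.la p) 1
  | .lw => .single .lw .one 1

/-- The matrix acting by `(-1) ^ deg` on the cohomology of one factor. -/
def parity (g : ℕ) : Matrix (Letter g) (Letter g) ℚ :=
  .diagonal fun l ↦ (-1) ^ l.deg

theorem mulMatrix_la_mul_la (p q : Fin g) : mulMatrix (.la p) * mulMatrix (.la q) = 0 := by
  simp [mulMatrix, mul_add, add_mul, Matrix.single_mul_single_of_ne]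

theorem mulMatrix_lb_mul_lb (p q : Fin g) : mulMatrix (.lb p) * mulMatrix (.lb q) = 0 := by
  simp [mulMatrix, mul_sub, sub_mul, Matrix.single_mul_single_of_ne]

theorem mulMatrix_la_mul_lb (p q : Fin g) :
    mulMatrix (.la p) * mulMatrix (.lb q) = if p = q then mulMatrix .lw else 0 := by
  rcases eq_or_ne p q with rfl | h
  · simp [mulMatrix, mul_sub, add_mul, Matrix.single_mul_single_of_ne]
  · simp [mulMatrix, mul_sub, add_mul, Matrix.single_mul_single_of_ne, h]

theorem mulMatrix_mul_mulMatrix (l m : Letter g) :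
    l.mulMatrix * m.mulMatrix = (-1 : ℚ) ^ (l.deg * m.deg) • (m.mulMatrix * l.mulMatrix) := by
  have hcross (p q : Fin g) : Matrix.single lw (la p) (1 : ℚ) * Matrix.single (la q) one 1 =
      Matrix.single lw (lb q) 1 * Matrix.single (lb p) one 1 := by
    rcases eq_or_ne p q with rfl | h
    · simp
    · simp [Matrix.single_mul_single_of_ne, h, h.symm]
  cases l <;> cases m <;>
    simp [mulMatrix, deg, mul_sub, add_mul, sub_mul, mul_add, Matrix.single_mul_single_of_ne,
      hcross]

theorem eq_or_of_mulMatrix_ne_zero {l x y : Letter g} (h : l.mulMatrix x y ≠ 0) :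
    l = .one ∧ x = y ∨ x = l ∧ y = .one ∨ x = .lw ∧ l.deg = 1 ∧ y.deg = 1 := by
  cases l <;> cases x <;> cases y <;>
    simp_all [mulMatrix, deg, Matrix.single_apply, Matrix.one_apply]

theorem deg_eq_of_mulMatrix_ne_zero {l x y : Letter g} (h : l.mulMatrix x y ≠ 0) :
    x.deg = l.deg + y.deg := by
  obtain ⟨rfl, rfl⟩ | ⟨rfl, rfl⟩ | ⟨rfl, hl, hy⟩ := eq_or_of_mulMatrix_ne_zero h
  · exact (zero_add _).symm
  · rfl
  · rw [hl, hy, deg]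

theorem isExc_of_mulMatrix_ne_zero [NeZero g] {l x y : Letter g} (h : l.mulMatrix x y ≠ 0)
    (hly : l.isExc ∨ y.isExc) : x.isExc := by
  obtain ⟨rfl, rfl⟩ | ⟨rfl, rfl⟩ | ⟨rfl, -, -⟩ := eq_or_of_mulMatrix_ne_zero h
  · exact hly.resolve_left id
  · exact hly.resolve_right id
  · trivial

theorem mulMatrix_mul_parity (l : Letter g) :
    l.mulMatrix * parity g = (-1 : ℚ) ^ l.deg • (parity g * l.mulMatrix) := by
  ext x y
  rw [parity, Matrix.mul_diagonal, Matrix.smul_apply, Matrix.diagonal_mul, smul_eq_mul]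
  rcases eq_or_ne (l.mulMatrix x y) 0 with h | h
  · rw [h, zero_mul, mul_zero, mul_zero]
  · rw [deg_eq_of_mulMatrix_ne_zero h, pow_add, mul_comm, ← mul_assoc, ← mul_assoc, ← mul_pow]
    simp

theorem mulMatrix_col_one (l : Letter g) : l.mulMatrix.col .one = Pi.single l 1 := by
  ext x
  cases l <;> cases x <;>
    simp [mulMatrix, Matrix.single_apply, Pi.single_apply, eq_comm]

end Letter

namespace SurfGen

open Letter

variable {n g : ℕ}

theorem deg_letter (u : SurfGen n g) : u.letter.deg = u.deg := by
  cases u <;> rfl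

/-- The operator of left multiplication by a generator on the `n`-th tensor power of the cohomology
of one factor, as a matrix in the basis of words. -/
def mulMatrix (u : SurfGen n g) : Matrix (Fin n → Letter g) (Fin n → Letter g) ℚ :=
  jordanWigner (parity g) u.deg u.slot u.letter.mulMatrix

theorem mulMatrix_mul_parity (u : SurfGen n g) :
    u.letter.mulMatrix * parity g = (-1 : ℚ) ^ u.deg • (parity g * u.letter.mulMatrix) :=
  deg_letter u ▸ Letter.mulMatrix_mul_parity u.letter

theorem mulMatrix_mul_mulMatrix (u v : SurfGen n g) :
    u.mulMatrix * v.mulMatrix = (-1 : ℚ) ^ (u.deg * v.deg) • (v.mulMatrix * u.mulMatrix) := by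
  rcases eq_or_ne u.slot v.slot with h | h
  · rw [mulMatrix, mulMatrix, h, jordanWigner_mul_same, jordanWigner_mul_same,
      Letter.mulMatrix_mul_mulMatrix, jordanWigner_smul, deg_letter, deg_letter, add_comm]
  · exact jordanWigner_mul_of_ne (mulMatrix_mul_parity u) (mulMatrix_mul_parity v) h

theorem lift_mulMatrix_eq_of_surfRel ⦃x y : FreeAlgebra ℚ (SurfGen n g)⦄ (h : SurfRel n g x y) :
    FreeAlgebra.lift ℚ mulMatrix x = FreeAlgebra.lift ℚ mulMatrix y := by
  cases h with
  | koszul u v =>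
    simpa only [map_mul, map_smul, FreeAlgebra.lift_ι_apply] using mulMatrix_mul_mulMatrix u v
  | _ =>
    simp only [map_mul, map_zero, FreeAlgebra.lift_ι_apply, mulMatrix, slot, letter, deg,
      jordanWigner_mul_same, mulMatrix_la_mul_la, mulMatrix_lb_mul_lb, mulMatrix_la_mul_lb,
      if_true, if_false, jordanWigner_zero, *]

theorem isExc_of_mulMatrix_ne_zero [NeZero g] {u : SurfGen n g} {v w : Fin n → Letter g}
    (h : u.mulMatrix v w ≠ 0) {k : Fin n} (hk : (w k).isExc) : (v k).isExc := by
  obtain ⟨hslot, hne⟩ := apply_ne_zero_of_jordanWigner_diagonal_apply_ne_zero h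
  rcases eq_or_ne k u.slot with rfl | hku
  · exact Letter.isExc_of_mulMatrix_ne_zero hslot (.inr hk)
  · rwa [hne k hku]

theorem isExc_slot_of_mulMatrix_ne_zero [NeZero g] {u : SurfGen n g} (hu : u.letter.isExc)
    {v w : Fin n → Letter g} (h : u.mulMatrix v w ≠ 0) : (v u.slot).isExc :=
  Letter.isExc_of_mulMatrix_ne_zero (apply_ne_zero_of_jordanWigner_diagonal_apply_ne_zero h).1
    (.inl hu)

theorem exists_mulMatrix_col_eq_single (u : SurfGen n g) {w : Fin n → Letter g}
    (hw : w u.slot = .one) :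
    ∃ c : ℚ, c ≠ 0 ∧ u.mulMatrix.col w = Pi.single (Function.update w u.slot u.letter) c := by
  refine ⟨_, ?_, jordanWigner_diagonal_col _ _ (hw ▸ u.letter.mulMatrix_col_one)⟩
  exact Finset.prod_ne_zero_iff.2 fun k _ ↦ by split_ifs <;> simp

end SurfGen

namespace SurfCoh

variable {n g : ℕ}

/-- The action of `SurfCoh n g` by left multiplication on the `n`-th tensor power of the cohomology
of one factor. -/
noncomputable def rep (n g : ℕ) :
    SurfCoh n g →ₐ[ℚ] Matrix (Fin n → Letter g) (Fin n → Letter g) ℚ :=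
  lift SurfGen.mulMatrix SurfGen.lift_mulMatrix_eq_of_surfRel

theorem rep_gen (u : SurfGen n g) : rep n g (gen u) = u.mulMatrix :=
  lift_gen _ u

theorem exists_rep_col_eq_single (w : Fin n → Letter g) :
    ∃ z, (rep n g z).col (fun _ ↦ .one) = Pi.single w 1 := by
  suffices h : ∀ (s : Finset (Fin n)) (w : Fin n → Letter g), (∀ k, k ∉ s → w k = .one) →
      ∃ z, (rep n g z).col (fun _ ↦ .one) = Pi.single w 1 from
    h .univ w fun k hk ↦ absurd (Finset.mem_univ k) hk
  intro s
  induction s using Finset.induction_on with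
  | empty =>
    intro w hw
    obtain rfl : w = fun _ ↦ .one := funext fun k ↦ hw k (Finset.notMem_empty k)
    exact ⟨1, by rw [map_one, ← Matrix.diagonal_one, Matrix.col_diagonal]⟩
  | insert i s _ ih =>
    intro w hw
    obtain ⟨z, hz⟩ := ih (Function.update w i .one) fun k hk ↦ by
      rcases eq_or_ne k i with rfl | hki
      · exact Function.update_self ..
      · rw [Function.update_of_ne hki, hw k (by simp [hki, hk])]
    rcases eq_or_ne (w i) .one with hwi | hwi
    · exact ⟨z, by rw [hz, ← hwi, Function.update_eq_self]⟩
    obtain ⟨u, rfl, hu⟩ := SurfGen.exists_slot_eq_letter_eq i hwi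
    obtain ⟨c, hc, hcol⟩ := u.exists_mulMatrix_col_eq_single (Function.update_self u.slot .one w)
    rw [hu, Function.update_idem, Function.update_eq_self] at hcol
    refine ⟨c⁻¹ • (gen u * z), ?_⟩
    calc (rep n g (c⁻¹ • (gen u * z))).col (fun _ ↦ .one)
        = c⁻¹ • u.mulMatrix.mulVec ((rep n g z).col fun _ ↦ .one) := by
          rw [map_smul, map_mul, rep_gen]; rfl
      _ = c⁻¹ • Pi.single w c := by rw [hz, Matrix.mulVec_single_one, hcol]
      _ = Pi.single w 1 := by rw [← Pi.single_smul, smul_eq_mul, inv_mul_cancel₀ hc]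

end SurfCoh

namespace SurfA

open SurfCoh

variable {n g : ℕ} [NeZero g]

noncomputable instance : DecidablePred (IsAdmissible (n := n) (g := g)) :=
  Classical.decPred _

theorem isAdmissible_one : IsAdmissible fun _ : Fin n ↦ (.one : Letter g) :=
  fun _ h ↦ h.elim

theorem rep_mem_blockTriangularSubalgebra (z : SurfCoh n g) :
    SurfCoh.rep n g z ∈ blockTriangularSubalgebra ℚ IsAdmissible := by
  have hgen : Algebra.adjoin ℚ (Set.range gen) ≤
      (blockTriangularSubalgebra ℚ IsAdmissible).comap (SurfCoh.rep n g) := by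
    rw [Algebra.adjoin_le_iff]
    rintro _ ⟨u, rfl⟩
    rw [SetLike.mem_coe, Subalgebra.mem_comap, rep_gen]
    intro v w hvw hv
    exact hv.anti fun k ↦ SurfGen.isExc_of_mulMatrix_ne_zero hvw
  exact hgen (adjoin_range_gen ▸ Algebra.mem_top)

/-- The diagonal block, indexed by the admissible words, of the action of `SurfCoh n g`. -/
noncomputable def admissibleBlock (n g : ℕ) [NeZero g] :
    SurfCoh n g →ₐ[ℚ] Matrix (AdmissibleWord n g) (AdmissibleWord n g) ℚ :=
  (diagonalBlockHom IsAdmissible).comp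
    ((SurfCoh.rep n g).codRestrict _ rep_mem_blockTriangularSubalgebra)

theorem admissibleBlock_apply (z : SurfCoh n g) (v w : AdmissibleWord n g) :
    admissibleBlock n g z v w = SurfCoh.rep n g z v w :=
  rfl

theorem admissibleBlock_gen_mul_gen {u v : SurfGen n g} (hu : u.letter.isExc)
    (hv : v.letter.isExc) (huv : u.slot ≠ v.slot) : admissibleBlock n g (gen u * gen v) = 0 := by
  ext x y
  by_contra hxy
  rw [admissibleBlock_apply, map_mul, rep_gen, rep_gen, Matrix.mul_apply] at hxy
  obtain ⟨z, -, hz⟩ := Finset.exists_ne_zero_of_sum_ne_zero hxy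
  have hxu := SurfGen.isExc_slot_of_mulMatrix_ne_zero hu (left_ne_zero_of_mul hz)
  have hzv := SurfGen.isExc_slot_of_mulMatrix_ne_zero hv (right_ne_zero_of_mul hz)
  exact huv (x.2 hxu (SurfGen.isExc_of_mulMatrix_ne_zero (left_ne_zero_of_mul hz) hzv))

variable [NeZero n]

theorem admissibleBlock_eq_of_aRel ⦃x y : SurfCoh n g⦄ (h : ARel n g x y) :
    admissibleBlock n g x = admissibleBlock n g y := by
  cases h with
  | xx i j p q hij hp hq =>
    rw [gX_of_ne_zero i hp, gX_of_ne_zero j hq, map_zero]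
    exact admissibleBlock_gen_mul_gen (u := .a i p) (v := .a j q) hp hq hij
  | xy i j p q hij hp hq =>
    rw [gX_of_ne_zero i hp, gY_of_ne_zero j hq, map_zero]
    exact admissibleBlock_gen_mul_gen (u := .a i p) (v := .b j q) hp hq hij
  | yy i j p q hij hp hq =>
    rw [gY_of_ne_zero i hp, gY_of_ne_zero j hq, map_zero]
    exact admissibleBlock_gen_mul_gen (u := .b i p) (v := .b j q) hp hq hij

/-- The action of `SurfA n g` on the span of the admissible words, the quotient of the tensor power
by the span of the other words. -/
noncomputable def rep (n g : ℕ) [NeZero n] [NeZero g] :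
    SurfA n g →ₐ[ℚ] Matrix (AdmissibleWord n g) (AdmissibleWord n g) ℚ :=
  lift (admissibleBlock n g) admissibleBlock_eq_of_aRel

/-- The action of `SurfA n g` on the unit word. -/
noncomputable def evalUnit (n g : ℕ) [NeZero n] [NeZero g] :
    SurfA n g →ₗ[ℚ] AdmissibleWord n g → ℚ :=
  .pi fun v ↦ Matrix.entryLinearMap ℚ ℚ v ⟨_, isAdmissible_one⟩ ∘ₗ (rep n g).toLinearMap

theorem evalUnit_toA (z : SurfCoh n g) (v : AdmissibleWord n g) :
    evalUnit n g (toA n g z) v = (SurfCoh.rep n g z).col (fun _ ↦ .one) v := by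
  change rep n g (toA n g z) v _ = _
  rw [rep, lift_toA, admissibleBlock_apply]
  rfl

theorem evalUnit_surjective : Function.Surjective (evalUnit n g) := by
  rw [← LinearMap.range_eq_top, eq_top_iff, ← (Pi.basisFun ℚ _).span_eq, Submodule.span_le]
  rintro _ ⟨w, rfl⟩
  obtain ⟨z, hz⟩ := exists_rep_col_eq_single w.1
  refine ⟨toA n g z, funext fun v ↦ ?_⟩
  simp only [evalUnit_toA, hz, Pi.basisFun_apply, Pi.single_apply, Subtype.ext_iff]

theorem linearIndependent_basisFunXY (hg : 2 ≤ g) : LinearIndependent ℚ (basisFunXY n g) :=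
  linearIndependent_of_span_eq_top_of_surjective (span_range_basisFunXY hg) evalUnit_surjective

end SurfA

/-- The images in `A_g` (`g ≥ 2`, `n ≥ 2`) of the monomials `v_1 ⋯ v_n` with
each `v_i ∈ {1, x_i(p), y_i(p), ω_i : 1 ≤ p ≤ g}` and at most one `v_i` in
`{x_i(p), y_i(p), ω_i : 2 ≤ p ≤ g}` form an additive (ℚ-vector space) basis of `A_g`. -/
theorem stmt6 (n g : ℕ) [NeZero n] [NeZero g] (hn : 2 ≤ n) (hg : 2 ≤ g) :
    LinearIndependent ℚ (basisFunXY n g) ∧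
      Submodule.span ℚ (Set.range (basisFunXY n g)) = ⊤ :=
  ⟨SurfA.linearIndependent_basisFunXY hg, SurfA.span_range_basisFunXY hg⟩
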